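/- arXiv:2210.04283 — 7 statements merged into one kernel-verified Lean document; each statement's English description precedes it below -/
import Mathlib

section
/- Every 2×2 matrix with integer entries, all of which are nonnegative, and with determinant 1 belongs to the multiplicative submonoid of 2×2 integer matrices generated by the two basic shears S = [[1,1],[0,1]] and T = [[1,0],[1,1]]. -/
/-!
Subtracting a row of a nonnegative integer matrix from a larger row undoes left multiplication by
an elementary shear. It keeps the entries nonnegative and the determinant fixed, and if no row is
zero it lowers the sum of the entries, so the process stops at a matrix none of whose rows dominates
another. For a `2 × 2` matrix `[[a, b], [c, d]]` of determinant `1` this forces `c < a` and `b < d`,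
whence `(c + 1) * (b + 1) ≤ a * d = b * c + 1`, so `b = c = 0` and the matrix is the identity.
-/

section RowReduction

open Matrix

variable {m n R : Type*} [DecidableEq n]

/-- The elementary shears with coefficient `1`: multiplying on the left by such a matrix adds one
row to a different row. -/
def unitShears (n R : Type*) [DecidableEq n] [CommRing R] : Set (Matrix n n R) :=
  {A | ∃ i j, i ≠ j ∧ transvection i j 1 = A}

theorem unitShears_fin_two [CommRing R] :
    unitShears (Fin 2) R = {!![1, 1; 0, 1], !![1, 0; 1, 1]} := by
  have upper : transvection (0 : Fin 2) 1 (1 : R) = !![1, 1; 0, 1] := by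
    ext i j; fin_cases i <;> fin_cases j <;> simp [transvection]
  have lower : transvection (1 : Fin 2) 0 (1 : R) = !![1, 0; 1, 1] := by
    ext i j; fin_cases i <;> fin_cases j <;> simp [transvection]
  ext A
  simp [unitShears, Fin.exists_fin_two, upper, lower, eq_comm]

variable [Fintype n]

theorem sum_transvection_mul [Fintype m] [CommRing R] (i j : n) (c : R) (M : Matrix n m R) :
    ∑ k, ∑ l, (transvection i j c * M) k l = ∑ k, ∑ l, M k l + c * ∑ l, M j l := by
  have row_sum (k : n) : ∑ l, (transvection i j c * M) k l =
      ∑ l, M k l + if k = i then c * ∑ l, M j l else 0 := by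
    by_cases hk : k = i
    · subst hk
      simp [Finset.sum_add_distrib, Finset.mul_sum]
    · simp [hk]
  simp [row_sum, Finset.sum_add_distrib]

theorem transvection_neg_one_mul_nonneg [CommRing R] [PartialOrder R] [IsOrderedAddMonoid R]
    {M : Matrix n m R} (hM : ∀ k l, 0 ≤ M k l) {i j : n} (hji : M j ≤ M i) (k : n) (l : m) :
    0 ≤ (transvection i j (-1 : R) * M) k l := by
  by_cases hk : k = i
  · subst hk
    simpa using hji l
  · simpa [hk] using hM k l

theorem sum_row_pos_of_det_ne_zero [CommRing R] [PartialOrder R] [IsOrderedAddMonoid R]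
    {M : Matrix n n R} (hM : ∀ k l, 0 ≤ M k l) (hdet : M.det ≠ 0) (j : n) :
    0 < ∑ l, M j l := by
  have row_ne_zero : M j ≠ 0 := fun h ↦ hdet (det_eq_zero_of_row_eq_zero j (congrFun h))
  exact Fintype.sum_pos (lt_of_le_of_ne (hM j) row_ne_zero.symm)

theorem exists_mem_closure_unitShears_mul_eq (M : Matrix n n ℤ)
    (hM : ∀ k l, 0 ≤ M k l) (hdet : M.det ≠ 0) :
    ∃ P ∈ Submonoid.closure (unitShears n ℤ), ∃ N : Matrix n n ℤ,
      (∀ k l, 0 ≤ N k l) ∧ N.det = M.det ∧ (Pairwise fun i j ↦ ¬ N j ≤ N i) ∧ P * N = M := by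
  induction hs : (∑ k, ∑ l, M k l).toNat using Nat.strong_induction_on generalizing M with
  | h s ih =>
    by_cases hred : Pairwise fun i j ↦ ¬ M j ≤ M i
    · exact ⟨1, one_mem _, M, hM, rfl, hred, one_mul M⟩
    obtain ⟨i, j, hij, hji⟩ : ∃ i j, i ≠ j ∧ M j ≤ M i := by simpa [Pairwise] using hred
    have hdet' : (transvection i j (-1) * M).det = M.det := by simp [hij]
    have hM' := transvection_neg_one_mul_nonneg hM hji
    have sum_lt : (∑ k, ∑ l, (transvection i j (-1 : ℤ) * M) k l).toNat < s := by
      have row_pos := sum_row_pos_of_det_ne_zero hM hdet j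
      have sum_nonneg : 0 ≤ ∑ k, ∑ l, (transvection i j (-1 : ℤ) * M) k l :=
        Finset.sum_nonneg fun k _ ↦ Finset.sum_nonneg fun l _ ↦ hM' k l
      have sum_eq := sum_transvection_mul i j (-1) M
      lia
    obtain ⟨P, hP, N, hN, hNdet, hNred, hPN⟩ := ih _ sum_lt _ hM' (hdet' ▸ hdet) rfl
    refine ⟨transvection i j 1 * P, mul_mem (Submonoid.subset_closure ⟨i, j, hij, rfl⟩) hP,
      N, hN, hNdet.trans hdet', hNred, ?_⟩
    rw [mul_assoc, hPN, ← mul_assoc, transvection_mul_transvection_same i j hij, add_neg_cancel,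
      transvection_zero, one_mul]

end RowReduction

theorem eq_one_of_det_eq_one_of_lt_diag {M : Matrix (Fin 2) (Fin 2) ℤ}
    (hM : ∀ i j, 0 ≤ M i j) (hdet : M.det = 1) (h₀ : M 1 0 < M 0 0) (h₁ : M 0 1 < M 1 1) :
    M = 1 := by
  rw [Matrix.det_fin_two] at hdet
  have hb := hM 0 1
  have hc := hM 1 0
  have mul_le : (M 1 0 + 1) * (M 0 1 + 1) ≤ M 0 0 * M 1 1 :=
    mul_le_mul h₀ h₁ (by lia) (hM 0 0)
  have hb0 : M 0 1 = 0 := by linarith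
  have hc0 : M 1 0 = 0 := by linarith
  have diag_mul : M 0 0 * M 1 1 = 1 := by simpa [hb0] using hdet
  have ha1 : M 0 0 = 1 := Int.eq_one_of_mul_eq_one_right (hM 0 0) diag_mul
  have hd1 : M 1 1 = 1 := Int.eq_one_of_mul_eq_one_left (hM 1 1) diag_mul
  rw [Matrix.eta_fin_two M, ha1, hb0, hc0, hd1, Matrix.one_fin_two]

theorem lt_diag_of_det_pos_of_pairwise_not_row_le {R : Type*} [CommRing R] [LinearOrder R]
    [IsOrderedRing R] {M : Matrix (Fin 2) (Fin 2) R}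
    (hM : ∀ i j, 0 ≤ M i j) (hdet : 0 < M.det) (hred : Pairwise fun i j ↦ ¬ M j ≤ M i) :
    M 1 0 < M 0 0 ∧ M 0 1 < M 1 1 := by
  have h₁₀ : M 1 0 ≤ M 0 0 → M 0 1 < M 1 1 := by
    simpa [Pi.le_def] using hred (zero_ne_one (α := Fin 2))
  have h₀₁ : M 0 0 ≤ M 1 0 → M 1 1 < M 0 1 := by
    simpa [Pi.le_def] using hred (one_ne_zero (α := Fin 2))
  have h₀ : M 1 0 < M 0 0 := by
    by_contra! hle
    have mul_le : M 0 0 * M 1 1 ≤ M 1 0 * M 0 1 :=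
      mul_le_mul hle (h₀₁ hle).le (hM 1 1) (hM 1 0)
    rw [Matrix.det_fin_two, sub_pos, mul_comm (M 0 1)] at hdet
    exact hdet.not_ge mul_le
  exact ⟨h₀, h₁₀ h₀.le⟩

theorem nonneg_det_one_mem_closure_shears
    (M : Matrix (Fin 2) (Fin 2) ℤ)
    (hnonneg : ∀ i j, 0 ≤ M i j) (hdet : M.det = 1) :
    M ∈ Submonoid.closure
      ({!![1, 1; 0, 1], !![1, 0; 1, 1]} : Set (Matrix (Fin 2) (Fin 2) ℤ)) := by
  obtain ⟨P, hP, N, hN, hNdet, hNred, rfl⟩ :=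
    exists_mem_closure_unitShears_mul_eq M hnonneg (by simp [hdet])
  rw [hdet] at hNdet
  obtain ⟨h₀, h₁⟩ := lt_diag_of_det_pos_of_pairwise_not_row_le hN (by simp [hNdet]) hNred
  rw [eq_one_of_det_eq_one_of_lt_diag hN hNdet h₀ h₁, mul_one, ← unitShears_fin_two]
  exact hP
end

section
/- Let α ∈ (0,1) be irrational and β ∈ ℝ, and define u : ℕ → ℤ by u(n) = ⌊(n+1)α + β⌋ − ⌊nα + β⌋. Then u is Sturmian: for every n : ℕ, the number of distinct words of length n occurring in u equals n + 1, i.e., Set.ncard {w : Fin n → ℤ | ∃ k, ∀ i, w i = u (k + i)} = n + 1. -/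
/-!
The word of length `n` read at position `k` depends only on the point `x = fract (k * α + β)` of the
rotation orbit, and it determines the floors `⌊j * α + x⌋` for `j ≤ n`. As `x` runs through `[0, 1)`
the `j`-th floor jumps exactly at `fract (-(j * α))`. For irrational `α` these `n + 1` jump points
are distinct, so they cut `[0, 1)` into `n + 1` intervals on which the word is constant and which it
tells apart; the orbit, being dense, visits all of them.
-/

open Set

section Breakpoints

variable {R X : Type*} [LinearOrder R] {f : R → X} {T : Finset R} {D : Set R} {a b x : R}

lemma exists_mem_forall_mem_le_iff (haT : a ∈ T) (hax : a ≤ x) :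
    ∃ s ∈ T, ∀ t ∈ T, (t ≤ x ↔ t ≤ s) := by
  have ha : a ∈ T.filter (· ≤ x) := Finset.mem_filter.2 ⟨haT, hax⟩
  obtain ⟨s, hs, hmax⟩ := (T.filter (· ≤ x)).exists_max_image id ⟨a, ha⟩
  obtain ⟨hsT, hsx⟩ := Finset.mem_filter.1 hs
  exact ⟨s, hsT, fun t ht =>
    ⟨fun htx => hmax t (Finset.mem_filter.2 ⟨ht, htx⟩), fun hts => hts.trans hsx⟩⟩

lemma exists_gt_forall_mem_Ioo_le_iff (T : Finset R) (hxb : x < b) :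
    ∃ c, x < c ∧ c ≤ b ∧ ∀ y ∈ Ioo x c, ∀ t ∈ T, (t ≤ y ↔ t ≤ x) := by
  have hb : b ∈ (insert b T).filter (x < ·) := Finset.mem_filter.2 ⟨Finset.mem_insert_self b T, hxb⟩
  obtain ⟨c, hc, hmin⟩ := ((insert b T).filter (x < ·)).exists_min_image id ⟨b, hb⟩
  refine ⟨c, (Finset.mem_filter.1 hc).2, hmin b hb, fun y hy t ht => ?_⟩
  refine ⟨fun hty => ?_, fun htx => htx.trans hy.1.le⟩
  by_contra! hxt
  have hct : c ≤ t := hmin t (Finset.mem_filter.2 ⟨Finset.mem_insert_of_mem ht, hxt⟩)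
  exact (hy.2.trans_le hct).not_ge hty

lemma image_eq_image_of_forall_mem_le_iff_imp_eq (haT : a ∈ T) (hT : (T : Set R) ⊆ Ico a b)
    (hf : ∀ x ∈ Ico a b, ∀ y ∈ Ico a b, (∀ t ∈ T, (t ≤ x ↔ t ≤ y)) → f x = f y)
    (hD : D ⊆ Ico a b) (hdense : ∀ c d, a ≤ c → c < d → d ≤ b → (D ∩ Ioo c d).Nonempty) :
    f '' D = f '' T := by
  apply Subset.antisymm
  · rintro _ ⟨x, hx, rfl⟩
    obtain ⟨s, hs, hxs⟩ := exists_mem_forall_mem_le_iff haT (hD hx).1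
    exact ⟨s, hs, (hf x (hD hx) s (hT hs) hxs).symm⟩
  · rintro _ ⟨s, hs, rfl⟩
    obtain ⟨c, hsc, hcb, hc⟩ := exists_gt_forall_mem_Ioo_le_iff T (hT hs).2
    obtain ⟨y, hyD, hy⟩ := hdense s c (hT hs).1 hsc hcb
    exact ⟨y, hyD, hf y (hD hyD) s (hT hs) (hc y hy)⟩

lemma ncard_image_eq_card_of_forall_eq_iff (haT : a ∈ T) (hT : (T : Set R) ⊆ Ico a b)
    (hf : ∀ x ∈ Ico a b, ∀ y ∈ Ico a b, (f x = f y ↔ ∀ t ∈ T, (t ≤ x ↔ t ≤ y)))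
    (hD : D ⊆ Ico a b) (hdense : ∀ c d, a ≤ c → c < d → d ≤ b → (D ∩ Ioo c d).Nonempty) :
    (f '' D).ncard = T.card := by
  have hinj : InjOn f T := by
    intro x hx y hy hxy
    have hle := (hf x (hT hx) y (hT hy)).1 hxy
    exact le_antisymm ((hle x hx).1 le_rfl) ((hle y hy).2 le_rfl)
  have himage : f '' D = f '' T :=
    image_eq_image_of_forall_mem_le_iff_imp_eq haT hT (fun x hx y hy => (hf x hx y hy).2) hD hdense
  rw [himage, hinj.ncard_image, ncard_coe_finset]

end Breakpoints

section IrrationalRotation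

variable {α : ℝ}

lemma denseRange_coe_natCast_mul_add {p : ℝ} [Fact (0 < p)] (hα : Irrational (α / p)) (β : ℝ) :
    DenseRange fun k : ℕ => ((k * α + β : ℝ) : AddCircle p) := by
  have hzsmul : DenseRange fun m : ℤ => m • (α : AddCircle p) :=
    AddCircle.denseRange_zsmul_coe_iff.2 hα
  have hnsmul : DenseRange fun k : ℕ => k • (α : AddCircle p) :=
    denseRange_zsmul_iff_nsmul.1 hzsmul
  have htranslate := (Homeomorph.addRight (β : AddCircle p)).surjective.denseRange.comp hnsmul
    (Homeomorph.addRight _).continuous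
  simpa [Function.comp_def, ← nsmul_eq_mul] using htranslate

lemma exists_fract_natCast_mul_add_mem_Ioo (hα : Irrational α) (β : ℝ) {c d : ℝ}
    (hc : 0 ≤ c) (hcd : c < d) (hd : d ≤ 1) : ∃ k : ℕ, Int.fract (k * α + β) ∈ Ioo c d := by
  have hopen : IsOpen (((↑) : ℝ → UnitAddCircle) '' Ioo c d) :=
    QuotientAddGroup.isOpenMap_coe _ isOpen_Ioo
  have hdense : DenseRange fun k : ℕ => ((k * α + β : ℝ) : UnitAddCircle) :=
    denseRange_coe_natCast_mul_add (by rwa [div_one]) β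
  obtain ⟨k, y, hy, hk⟩ := hdense.exists_mem_open hopen ((nonempty_Ioo.2 hcd).image _)
  have hfract : Int.fract y = Int.fract (k * α + β) := by
    simpa only [AddCircle.coe_equivIco_mk_apply, div_one, mul_one] using
      congrArg (fun z : UnitAddCircle => (AddCircle.equivIco 1 0 z : ℝ)) hk
  have hy_fract : Int.fract y = y := Int.fract_eq_self.2 ⟨hc.trans hy.1.le, hy.2.trans_le hd⟩
  exact ⟨k, by rwa [← hfract, hy_fract]⟩

lemma injective_fract_natCast_mul (hα : Irrational α) :
    Function.Injective fun j : ℕ => Int.fract (j * α) := by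
  intro i j hij
  obtain ⟨z, hz⟩ := Int.fract_eq_fract.1 hij
  by_contra hne
  have hsub : (i : ℤ) - j ≠ 0 := by lia
  refine hα.intCast_mul hsub ⟨z, ?_⟩
  push_cast
  linarith

end IrrationalRotation

section MechanicalWord

variable {R : Type*} [CommRing R] [LinearOrder R] [IsStrictOrderedRing R] [FloorRing R]

lemma floor_add_eq_ite (c : R) {x : R} (hx : x ∈ Ico (0 : R) 1) :
    ⌊c + x⌋ = if Int.fract (-c) ≤ x then ⌈c⌉ else ⌈c⌉ - 1 := by
  have hfract : Int.fract (-c) = ⌈c⌉ - c := by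
    rw [Int.fract, Int.floor_neg]
    push_cast
    ring
  have hceil := Int.le_ceil c
  have hceil' := Int.ceil_lt_add_one c
  rw [hfract, Int.floor_eq_iff]
  split_ifs with h <;> push_cast <;> constructor <;> linarith [hx.1, hx.2]

lemma floor_add_eq_floor_add_iff (c : R) {x y : R} (hx : x ∈ Ico (0 : R) 1)
    (hy : y ∈ Ico (0 : R) 1) :
    ⌊c + x⌋ = ⌊c + y⌋ ↔ (Int.fract (-c) ≤ x ↔ Int.fract (-c) ≤ y) := by
  rw [floor_add_eq_ite c hx, floor_add_eq_ite c hy]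
  split_ifs with hcx hcy hcy <;> simp only [hcx, hcy] <;> lia

lemma forall_sub_eq_sub_iff_forall_eq {G : Type*} [AddGroup G] {v w : ℕ → G} (h0 : v 0 = w 0)
    (n : ℕ) :
    (∀ i < n, v (i + 1) - v i = w (i + 1) - w i) ↔ ∀ j < n + 1, v j = w j := by
  refine ⟨fun h j hj => ?_, fun h i hi => by rw [h i (by lia), h (i + 1) (by lia)]⟩
  induction j with
  | zero => exact h0
  | succ j ih =>
    have hstep := h j (by lia)
    rwa [ih (by lia), sub_left_inj] at hstep

/-- The mechanical word of slope `α`, intercept `x` and length `n`: the first `n` letters of the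
mechanical sequence of slope `α` and intercept `x`. -/
def mechanicalWord (α : R) (n : ℕ) (x : R) : Fin n → ℤ :=
  fun i => ⌊((i : ℕ) + 1) * α + x⌋ - ⌊(i : ℕ) * α + x⌋

/-- The points of `[0, 1)` at which one of the floors `⌊j * α + x⌋`, `j ≤ n`, jumps as a function
of `x`. The value `j = 0` contributes the left endpoint `0`. -/
def cutPoints (α : R) (n : ℕ) : Finset R :=
  (Finset.range (n + 1)).image fun j : ℕ => Int.fract (-(j * α))

lemma mechanicalWord_fract (α : R) (n : ℕ) (x : R) :
    mechanicalWord α n (Int.fract x) = mechanicalWord α n x := by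
  funext i
  simp only [mechanicalWord, Int.fract, ← add_sub_assoc, Int.floor_sub_intCast,
    sub_sub_sub_cancel_right]

lemma zero_mem_cutPoints (α : R) (n : ℕ) : 0 ∈ cutPoints α n :=
  Finset.mem_image.2 ⟨0, by simp, by simp⟩

lemma cutPoints_subset_Ico (α : R) (n : ℕ) : (cutPoints α n : Set R) ⊆ Ico 0 1 := by
  simp only [cutPoints, Finset.coe_image, image_subset_iff]
  exact fun j _ => ⟨Int.fract_nonneg _, Int.fract_lt_one _⟩

lemma card_cutPoints {α : ℝ} (hα : Irrational α) (n : ℕ) : (cutPoints α n).card = n + 1 := by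
  simp only [cutPoints, ← mul_neg]
  rw [Finset.card_image_of_injective _ (injective_fract_natCast_mul hα.neg), Finset.card_range]

lemma mechanicalWord_eq_iff (α : R) (n : ℕ) {x y : R} (hx : x ∈ Ico (0 : R) 1)
    (hy : y ∈ Ico (0 : R) 1) :
    mechanicalWord α n x = mechanicalWord α n y ↔ ∀ t ∈ cutPoints α n, (t ≤ x ↔ t ≤ y) := by
  have hzero : ⌊((0 : ℕ) : R) * α + x⌋ = ⌊((0 : ℕ) : R) * α + y⌋ := by
    simp [Int.floor_eq_zero_iff.2 hx, Int.floor_eq_zero_iff.2 hy]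
  calc mechanicalWord α n x = mechanicalWord α n y
    _ ↔ ∀ i < n, ⌊((i + 1 : ℕ) : R) * α + x⌋ - ⌊(i : R) * α + x⌋ =
          ⌊((i + 1 : ℕ) : R) * α + y⌋ - ⌊(i : R) * α + y⌋ := by
      simp [funext_iff, Fin.forall_iff, mechanicalWord]
    _ ↔ ∀ j < n + 1, ⌊(j : R) * α + x⌋ = ⌊(j : R) * α + y⌋ :=
      forall_sub_eq_sub_iff_forall_eq (v := fun j : ℕ => ⌊(j : R) * α + x⌋)
        (w := fun j : ℕ => ⌊(j : R) * α + y⌋) hzero n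
    _ ↔ ∀ t ∈ cutPoints α n, (t ≤ x ↔ t ≤ y) := by
      simp [cutPoints, floor_add_eq_floor_add_iff _ hx hy]

lemma setOf_factor_eq_image_mechanicalWord (α β : R) {u : ℕ → ℤ}
    (hu : ∀ n : ℕ, u n = ⌊((n : R) + 1) * α + β⌋ - ⌊(n : R) * α + β⌋) (n : ℕ) :
    {w : Fin n → ℤ | ∃ k : ℕ, ∀ i : Fin n, w i = u (k + i)} =
      mechanicalWord α n '' Set.range fun k : ℕ => Int.fract (k * α + β) := by
  have hfactor (k : ℕ) :
      mechanicalWord α n (Int.fract (k * α + β)) = fun i : Fin n => u (k + i) := by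
    rw [mechanicalWord_fract]
    funext i
    simp only [mechanicalWord, hu, Nat.cast_add]
    congr 2 <;> ring
  ext w
  simp [hfactor, funext_iff, eq_comm]

end MechanicalWord

theorem mechanical_irrational_is_sturmian_general (α β : ℝ) (hα : Irrational α)
    (u : ℕ → ℤ) (hu : ∀ n : ℕ, u n = ⌊((n : ℝ) + 1) * α + β⌋ - ⌊(n : ℝ) * α + β⌋) (n : ℕ) :
    Set.ncard {w : Fin n → ℤ | ∃ k : ℕ, ∀ i : Fin n, w i = u (k + i)} = n + 1 := by
  have horbit : (Set.range fun k : ℕ => Int.fract (k * α + β)) ⊆ Ico 0 1 := by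
    rintro _ ⟨k, rfl⟩
    exact ⟨Int.fract_nonneg _, Int.fract_lt_one _⟩
  have hdense (c d : ℝ) (hc : 0 ≤ c) (hcd : c < d) (hd : d ≤ 1) :
      ((Set.range fun k : ℕ => Int.fract (k * α + β)) ∩ Ioo c d).Nonempty := by
    obtain ⟨k, hk⟩ := exists_fract_natCast_mul_add_mem_Ioo hα β hc hcd hd
    exact ⟨_, mem_range_self k, hk⟩
  rw [setOf_factor_eq_image_mechanicalWord α β hu n, ← card_cutPoints hα n]
  exact ncard_image_eq_card_of_forall_eq_iff (zero_mem_cutPoints α n) (cutPoints_subset_Ico α n)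
    (fun x hx y hy => mechanicalWord_eq_iff α n hx hy) horbit hdense

theorem mechanical_irrational_is_sturmian (α β : ℝ) (h0 : 0 < α) (h1 : α < 1)
    (hirr : α ∉ Set.range ((↑) : ℚ → ℝ))
    (u : ℕ → ℤ) (hu : ∀ n : ℕ, u n = ⌊((n : ℝ) + 1) * α + β⌋ - ⌊(n : ℝ) * α + β⌋) :
    ∀ n : ℕ, Set.ncard {w : Fin n → ℤ | ∃ k : ℕ, ∀ i : Fin n, w i = u (k + i)} = n + 1 :=
  mechanical_irrational_is_sturmian_general α β hirr u hu
end

section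
/- Let α ∈ [0,1] and β ∈ ℝ, and define u : ℕ → ℤ by u(n) = ⌊(n+1)α + β⌋ − ⌊nα + β⌋. Then u is balanced: for every n : ℕ and all k, l : ℕ, the number of indices i < n with u(k + i) = 1 and the number of indices i < n with u(l + i) = 1 differ by at most 1. -/
/-!
A window of length `n` in the mechanical sequence telescopes to `⌊x + n * α⌋ - ⌊x⌋`, where `x`
depends on the position of the window. Such a difference is `⌊n * α⌋` or `⌊n * α⌋ + 1`, so window
sums of equal length differ by at most `1`. Since the sequence takes only the values `⌊α⌋` and
`⌊α⌋ + 1`, the sum of a window of given length determines how often each letter occurs in it.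
-/

open Finset

/-- A sequence is balanced if, for every letter, any two windows of equal length contain that letter
equally often up to a difference of `1`. Over a two-letter alphabet it suffices to count one of the
letters, which gives the classical notion. -/
def IsBalanced {A : Type*} [DecidableEq A] (u : ℕ → A) : Prop :=
  ∀ (a : A) (n k l : ℕ), |(#{i ∈ range n | u (k + i) = a} : ℤ) - #{i ∈ range n | u (l + i) = a}| ≤ 1

section TwoLetters

variable {ι : Type*} {s : Finset ι} {f g : ι → ℤ} {c : ℤ}

lemma card_filter_eq_add_one (hf : ∀ i ∈ s, f i = c ∨ f i = c + 1) :
    (#{i ∈ s | f i = c + 1} : ℤ) = ∑ i ∈ s, f i - #s * c := by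
  have indicator_eq : ∀ i ∈ s, (if f i = c + 1 then 1 else 0) = f i - c := fun i hi ↦ by
    rcases hf i hi with h | h <;> simp [h]
  rw [natCast_card_filter, sum_congr rfl indicator_eq, sum_sub_distrib, sum_const, nsmul_eq_mul]

lemma card_filter_eq (hf : ∀ i ∈ s, f i = c ∨ f i = c + 1) :
    (#{i ∈ s | f i = c} : ℤ) = #s * (c + 1) - ∑ i ∈ s, f i := by
  have indicator_eq : ∀ i ∈ s, (if f i = c then 1 else 0) = c + 1 - f i := fun i hi ↦ by
    rcases hf i hi with h | h <;> simp [h]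
  rw [natCast_card_filter, sum_congr rfl indicator_eq, sum_sub_distrib, sum_const, nsmul_eq_mul]

lemma abs_card_filter_eq_sub_le_abs_sum_sub (hf : ∀ i ∈ s, f i = c ∨ f i = c + 1)
    (hg : ∀ i ∈ s, g i = c ∨ g i = c + 1) (a : ℤ) :
    |(#{i ∈ s | f i = a} : ℤ) - #{i ∈ s | g i = a}| ≤ |∑ i ∈ s, f i - ∑ i ∈ s, g i| := by
  by_cases ha : a = c ∨ a = c + 1
  · rcases ha with rfl | rfl
    · rw [card_filter_eq hf, card_filter_eq hg, sub_sub_sub_cancel_left, abs_sub_comm]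
    · rw [card_filter_eq_add_one hf, card_filter_eq_add_one hg, sub_sub_sub_cancel_right]
  · have hfa : ∀ i ∈ s, f i ≠ a := fun i hi h ↦ ha (h ▸ hf i hi)
    have hga : ∀ i ∈ s, g i ≠ a := fun i hi h ↦ ha (h ▸ hg i hi)
    simp [filter_false_of_mem hfa, filter_false_of_mem hga]

end TwoLetters

section Mechanical

variable {R : Type*} [Ring R] [LinearOrder R] [FloorRing R]

/-- The mechanical sequence `u_{α,β}` of slope `α` and intercept `β`: the first differences of
`⌊n * α + β⌋`. -/
def mechanicalSeq (α β : R) (n : ℕ) : ℤ :=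
  ⌊((n : R) + 1) * α + β⌋ - ⌊(n : R) * α + β⌋

lemma sum_range_mechanicalSeq (α β : R) (k n : ℕ) :
    ∑ i ∈ range n, mechanicalSeq α β (k + i) = ⌊k * α + β + n * α⌋ - ⌊k * α + β⌋ := by
  have telescope := sum_range_sub (fun i : ℕ ↦ ⌊((k + i : ℕ) : R) * α + β⌋) n
  simpa only [mechanicalSeq, Nat.cast_add, Nat.cast_one, Nat.cast_zero, add_zero, ← add_assoc,
    add_mul, add_right_comm _ _ β] using telescope

variable [IsStrictOrderedRing R]

lemma floor_add_sub_floor_eq_or (x d : R) :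
    ⌊x + d⌋ - ⌊x⌋ = ⌊d⌋ ∨ ⌊x + d⌋ - ⌊x⌋ = ⌊d⌋ + 1 := by
  have lower : ⌊x⌋ + ⌊d⌋ ≤ ⌊x + d⌋ := Int.le_floor_add x d
  have upper : ⌊x + d⌋ - 1 ≤ ⌊x⌋ + ⌊d⌋ := Int.le_floor_add_floor x d
  lia

lemma abs_floor_add_sub_floor_sub_le_one (x y d : R) :
    |(⌊x + d⌋ - ⌊x⌋) - (⌊y + d⌋ - ⌊y⌋)| ≤ 1 := by
  rcases floor_add_sub_floor_eq_or x d with hx | hx <;>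
    rcases floor_add_sub_floor_eq_or y d with hy | hy <;> simp [hx, hy]

lemma mechanicalSeq_eq_floor_or (α β : R) (n : ℕ) :
    mechanicalSeq α β n = ⌊α⌋ ∨ mechanicalSeq α β n = ⌊α⌋ + 1 := by
  rw [mechanicalSeq, add_one_mul, add_right_comm]
  exact floor_add_sub_floor_eq_or _ α

theorem mechanical_is_balanced_general (α β : R) : IsBalanced (mechanicalSeq α β) := by
  intro a n k l
  calc |(#{i ∈ range n | mechanicalSeq α β (k + i) = a} : ℤ)
        - #{i ∈ range n | mechanicalSeq α β (l + i) = a}|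
    _ ≤ |∑ i ∈ range n, mechanicalSeq α β (k + i) - ∑ i ∈ range n, mechanicalSeq α β (l + i)| :=
      abs_card_filter_eq_sub_le_abs_sum_sub (fun i _ ↦ mechanicalSeq_eq_floor_or α β (k + i))
        (fun i _ ↦ mechanicalSeq_eq_floor_or α β (l + i)) a
    _ ≤ 1 := by
      rw [sum_range_mechanicalSeq, sum_range_mechanicalSeq]
      exact abs_floor_add_sub_floor_sub_le_one _ _ _

end Mechanical

theorem mechanical_is_balanced (α β : ℝ) (h0 : 0 ≤ α) (h1 : α ≤ 1)
    (u : ℕ → ℤ) (hu : ∀ n : ℕ, u n = ⌊((n : ℝ) + 1) * α + β⌋ - ⌊(n : ℝ) * α + β⌋) :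
    ∀ n k l : ℕ,
      |(((Finset.range n).filter (fun i => u (k + i) = 1)).card : ℤ) -
        (((Finset.range n).filter (fun i => u (l + i) = 1)).card : ℤ)| ≤ 1 := by
  obtain rfl : u = mechanicalSeq α β := funext hu
  exact mechanical_is_balanced_general α β 1
end

section
/- Let α ∈ (0,1) be irrational and β ∈ ℝ, and define u : ℕ → ℤ by u(n) = ⌊(n+1)α + β⌋ − ⌊nα + β⌋. Then u is not eventually periodic: there do not exist N : ℕ and T > 0 such that u(n + T) = u(n) for all n ≥ N. -/
/-!
Every tail of a mechanical sequence is again mechanical, with the same slope `α`, so it is enough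
to exclude pure periodicity. The sequence consists of the first differences of `n ↦ ⌊nα + β⌋`; if
it has period `T`, this function grows by a fixed integer `c` over each block of length `T`, so
`⌊kTα + β⌋ = ⌊β⌋ + kc` for all `k`. Hence `k(Tα - c)` stays bounded, which forces `Tα = c`.
-/

open scoped fwdDiff

theorem add_eq_add_of_periodic_fwdDiff {G : Type*} [AddCommGroup G] {f : ℕ → G} {T : ℕ}
    (h : Function.Periodic (Δ_[1] f) T) (n : ℕ) : f (n + T) = f n + (f T - f 0) := by
  induction n with
  | zero => simp
  | succ n ih =>
    have hn : f (n + T + 1) - f (n + T) = f (n + 1) - f n := h n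
    rw [add_right_comm, eq_add_of_sub_eq hn, ih]
    abel

theorem nsmul_eq_add_nsmul_of_periodic_fwdDiff {G : Type*} [AddCommGroup G] {f : ℕ → G} {T : ℕ}
    (h : Function.Periodic (Δ_[1] f) T) (k : ℕ) : f (k • T) = f 0 + k • (f T - f 0) :=
  AddConstMapClass.map_nsmul_const
    (⟨f, add_eq_add_of_periodic_fwdDiff h⟩ : AddConstMap ℕ G T (f T - f 0)) k

theorem eq_zero_of_forall_nsmul_abs_le {G : Type*} [AddCommGroup G] [LinearOrder G]
    [IsOrderedAddMonoid G] [Archimedean G] {a b : G} (h : ∀ k : ℕ, k • |a| ≤ b) : a = 0 := by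
  by_contra ha
  obtain ⟨k, hk⟩ := exists_lt_nsmul (abs_pos.mpr ha) b
  exact (h k).not_gt hk

section Ring

variable {R : Type*} [Ring R] [LinearOrder R] [FloorRing R]

/-- The lower mechanical sequence of slope `α` and intercept `β`: the increments of
`n ↦ ⌊nα + β⌋`. The slope is not restricted to `[0, 1]`, so values other than `0` and `1` occur. -/
def mechanicalSequence (α β : R) (n : ℕ) : ℤ :=
  ⌊((n : R) + 1) * α + β⌋ - ⌊(n : R) * α + β⌋

theorem mechanicalSequence_eq_fwdDiff (α β : R) :
    mechanicalSequence α β = Δ_[1] (fun n : ℕ ↦ ⌊(n : R) * α + β⌋) := by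
  funext n
  simp only [mechanicalSequence, fwdDiff, Nat.cast_add_one]

theorem mechanicalSequence_add (α β : R) (N n : ℕ) :
    mechanicalSequence α β (N + n) = mechanicalSequence α (N * α + β) n := by
  simp only [mechanicalSequence, Nat.cast_add, add_mul]
  congr 2 <;> abel

variable [IsStrictOrderedRing R] [Archimedean R]

theorem eq_intCast_of_forall_floor_nsmul_add {x y : R} {c : ℤ}
    (h : ∀ k : ℕ, ⌊k • y + x⌋ = ⌊x⌋ + k • c) : y = c := by
  refine sub_eq_zero.mp (eq_zero_of_forall_nsmul_abs_le (b := 1) fun k ↦ ?_)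
  have hfloor : ⌊k • y + x - (k • c : ℤ)⌋ = ⌊x⌋ := by
    rw [Int.floor_sub_intCast, h, add_sub_cancel_right]
  calc k • |y - c| = |k • y + x - (k • c : ℤ) - x| := by
        rw [← abs_nsmul, nsmul_sub, nsmul_eq_mul k c, nsmul_eq_mul k (c : R)]
        push_cast
        congr 1
        abel
    _ ≤ 1 := (Int.abs_sub_lt_one_of_floor_eq_floor hfloor).le

theorem exists_natCast_mul_eq_intCast_of_periodic_mechanicalSequence
    {α β : R} {T : ℕ} (h : Function.Periodic (mechanicalSequence α β) T) :
    ∃ c : ℤ, (T : R) * α = c := by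
  rw [mechanicalSequence_eq_fwdDiff] at h
  refine ⟨⌊(T : R) * α + β⌋ - ⌊β⌋, eq_intCast_of_forall_floor_nsmul_add (x := β) fun k ↦ ?_⟩
  simpa [mul_assoc] using nsmul_eq_add_nsmul_of_periodic_fwdDiff h k

end Ring

theorem mechanical_irrational_not_eventually_periodic_general {K : Type*} [Field K] [LinearOrder K]
    [IsStrictOrderedRing K] [FloorRing K] {α : K} (hirr : α ∉ Set.range ((↑) : ℚ → K)) (β : K) :
    ¬ ∃ (N : ℕ) (T : ℕ), 0 < T ∧
      ∀ n : ℕ, N ≤ n → mechanicalSequence α β (n + T) = mechanicalSequence α β n := by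
  rintro ⟨N, T, hT, hper⟩
  have htail : Function.Periodic (mechanicalSequence α (N * α + β)) T := fun n ↦ by
    simpa only [← mechanicalSequence_add, add_assoc] using hper (N + n) (Nat.le_add_right N n)
  obtain ⟨c, hc⟩ := exists_natCast_mul_eq_intCast_of_periodic_mechanicalSequence htail
  have hα : α = c / T := eq_div_of_mul_eq (Nat.cast_ne_zero.mpr hT.ne') (by rw [mul_comm, hc])
  exact hirr ⟨c / T, by rw [hα]; push_cast; rfl⟩

theorem mechanical_irrational_not_eventually_periodic (α β : ℝ) (h0 : 0 < α) (h1 : α < 1)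
    (hirr : α ∉ Set.range ((↑) : ℚ → ℝ))
    (u : ℕ → ℤ) (hu : ∀ n : ℕ, u n = ⌊((n : ℝ) + 1) * α + β⌋ - ⌊(n : ℝ) * α + β⌋) :
    ¬ ∃ (N : ℕ) (T : ℕ), 0 < T ∧ ∀ n : ℕ, N ≤ n → u (n + T) = u n := by
  obtain rfl : u = mechanicalSequence α β := funext hu
  exact mechanical_irrational_not_eventually_periodic_general hirr β
end

section
/- Let u : ℕ → Bool be a Sturmian sequence, i.e., for every n : ℕ the complexity p(u, n) = Set.ncard {w : Fin n → Bool | ∃ k, ∀ i, w i = u (k + i)} equals n + 1. Then u is recurrent: every word that occurs in u occurs infinitely often. Precisely, for all n, k : ℕ and every N : ℕ there exists m ≥ N such that u(m + i) = u(k + i) for all i < n. -/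
/-!
If `p(u, n + 1) ≤ p(u, n) < ∞`, every factor of length `n` has a unique right extension, so it
determines the whole tail following it; then `u` has only finitely many tails, i.e. it is eventually
periodic. Hence a sequence that is not eventually periodic has at least `n + 1` factors of length
`n` (Morse–Hedlund), and so does each of its tails. If it has at most `n + 1` of them, passing to a
tail loses none: each still occurs beyond any prescribed position.
-/

section Factors

variable {α : Type*} {u : ℕ → α}

/-- The tail of the sequence `u` starting at position `k`, i.e. the `k`-th shift of `u`. -/
def tail (u : ℕ → α) (k : ℕ) : ℕ → α := fun j => u (k + j)

/-- The factor (subword) of length `n` occurring in `u` at position `k`. -/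
def factor (u : ℕ → α) (n k : ℕ) : Fin n → α := fun i => u (k + i)

/-- The complexity function `p(u, n)` counting the factors of length `n` of `u`. It takes values in
`ℕ∞` so that it is meaningful over an infinite alphabet. -/
noncomputable def factorComplexity (u : ℕ → α) (n : ℕ) : ℕ∞ := (Set.range (factor u n)).encard

/-- Eventual periodicity, encoded as finiteness of the set of tails. This amounts to the usual
definition: two tails of `u`, starting at distinct positions `a < b`, coincide exactly when `b - a`
is a period of `u` from position `a` on. -/
def EventuallyPeriodic (u : ℕ → α) : Prop := (Set.range (tail u)).Finite

lemma factor_tail (u : ℕ → α) (N n k : ℕ) : factor (tail u N) n k = factor u n (N + k) := by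
  funext i
  simp only [factor, tail, add_assoc]

lemma tail_tail (u : ℕ → α) (N k : ℕ) : tail (tail u N) k = tail u (N + k) := by
  funext j
  simp only [tail, add_assoc]

lemma image_range_tail (u : ℕ → α) (n : ℕ) :
    (fun (v : ℕ → α) (i : Fin n) => v i) '' Set.range (tail u) = Set.range (factor u n) :=
  (Set.range_comp _ _).symm

lemma image_init_range_factor (u : ℕ → α) (n : ℕ) :
    Fin.init '' Set.range (factor u (n + 1)) = Set.range (factor u n) :=
  (Set.range_comp _ _).symm

lemma EventuallyPeriodic.of_tail {N : ℕ} (h : EventuallyPeriodic (tail u N)) :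
    EventuallyPeriodic u := by
  refine (((Set.finite_Iio N).image (tail u)).union h).subset ?_
  rintro _ ⟨k, rfl⟩
  rcases lt_or_ge k N with hk | hk
  · exact .inl ⟨k, hk, rfl⟩
  · exact .inr ⟨k - N, by rw [tail_tail, Nat.add_sub_cancel' hk]⟩

lemma not_eventuallyPeriodic_of_add_one_le_factorComplexity
    (h : ∀ n : ℕ, n + 1 ≤ factorComplexity u n) : ¬EventuallyPeriodic u := by
  intro hu
  refine ((ENat.add_one_le_iff (ENat.natCast_ne_top _)).1 (h (Set.range (tail u)).ncard)).not_ge ?_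
  rw [factorComplexity, ← image_range_tail, hu.cast_ncard_eq]
  exact Set.encard_image_le _ _

lemma factor_succ_eq_of_factorComplexity_succ_le {n : ℕ} (hfin : factorComplexity u (n + 1) ≠ ⊤)
    (hle : factorComplexity u (n + 1) ≤ factorComplexity u n) {a b : ℕ}
    (hab : factor u n a = factor u n b) : factor u (n + 1) a = factor u (n + 1) b := by
  have hinj : Set.InjOn Fin.init (Set.range (factor u (n + 1))) := by
    refine (Set.encard_ne_top_iff.1 hfin).injOn_of_encard_image_eq ?_
    refine (Set.encard_image_le _ _).antisymm ?_
    rwa [image_init_range_factor]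
  exact hinj ⟨a, rfl⟩ ⟨b, rfl⟩ hab

lemma tail_eq_of_factor_eq {n : ℕ}
    (hdet : ∀ {a b}, factor u n a = factor u n b → factor u (n + 1) a = factor u (n + 1) b)
    {a b : ℕ} (hab : factor u n a = factor u n b) : tail u a = tail u b := by
  funext j
  induction j generalizing a b with
  | zero => exact congrFun (hdet hab) 0
  | succ j ih =>
    have hshift : factor u n (a + 1) = factor u n (b + 1) := by
      funext i
      simpa [factor, add_assoc, add_comm 1] using congrFun (hdet hab) i.succ
    simpa [tail, add_assoc, add_comm 1] using ih hshift

lemma eventuallyPeriodic_of_factorComplexity_succ_le {n : ℕ}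
    (hfin : factorComplexity u (n + 1) ≠ ⊤)
    (hle : factorComplexity u (n + 1) ≤ factorComplexity u n) : EventuallyPeriodic u := by
  have hfactors : (Set.range (factor u n)).Finite := by
    rw [← image_init_range_factor]
    exact (Set.encard_ne_top_iff.1 hfin).image _
  rw [← image_range_tail] at hfactors
  refine hfactors.of_finite_image ?_
  rintro _ ⟨a, rfl⟩ _ ⟨b, rfl⟩ hab
  exact tail_eq_of_factor_eq (factor_succ_eq_of_factorComplexity_succ_le hfin hle) hab

theorem add_one_le_factorComplexity (hu : ¬EventuallyPeriodic u) (n : ℕ) :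
    n + 1 ≤ factorComplexity u n := by
  induction n with
  | zero => simpa [factorComplexity] using Set.range_nonempty (factor u 0)
  | succ n ih =>
    by_contra! hlt
    have hle : factorComplexity u (n + 1) ≤ n + 1 := by exact_mod_cast Order.le_of_lt_add_one hlt
    exact hu (eventuallyPeriodic_of_factorComplexity_succ_le hlt.ne_top (hle.trans ih))

lemma range_factor_tail_eq {n : ℕ} (hu : ¬EventuallyPeriodic u)
    (hn : factorComplexity u n ≤ n + 1) (N : ℕ) :
    Set.range (factor (tail u N) n) = Set.range (factor u n) := by
  have hfin : (Set.range (factor u n)).Finite :=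
    Set.finite_of_encard_le_coe (k := n + 1) (by exact_mod_cast hn)
  have hsub : Set.range (factor (tail u N) n) ⊆ Set.range (factor u n) := by
    rintro _ ⟨k, rfl⟩
    exact ⟨N + k, (factor_tail u N n k).symm⟩
  exact hfin.eq_of_subset_of_encard_le' hsub
    (hn.trans (add_one_le_factorComplexity (mt EventuallyPeriodic.of_tail hu) n))

lemma factorComplexity_eq_of_ncard_eq {n c : ℕ} (hc : c ≠ 0)
    (h : {w : Fin n → α | ∃ k : ℕ, ∀ i : Fin n, w i = u (k + i)}.ncard = c) :
    factorComplexity u n = c := by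
  have hset : {w : Fin n → α | ∃ k : ℕ, ∀ i : Fin n, w i = u (k + i)} =
      Set.range (factor u n) := by
    ext w
    simp only [Set.mem_ofPred_eq, Set.mem_range, factor, funext_iff, eq_comm]
  rw [hset] at h
  exact (ENat.toNat_eq_iff hc).1 h

theorem sturmian_recurrent_general {n : ℕ} (hu : ¬EventuallyPeriodic u)
    (hn : factorComplexity u n ≤ n + 1) (k N : ℕ) :
    ∃ m : ℕ, N ≤ m ∧ ∀ i : ℕ, i < n → u (m + i) = u (k + i) := by
  obtain ⟨l, hl⟩ : factor u n k ∈ Set.range (factor (tail u N) n) := by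
    rw [range_factor_tail_eq hu hn]
    exact ⟨k, rfl⟩
  rw [factor_tail] at hl
  exact ⟨N + l, Nat.le_add_right N l, fun i hi => congrFun hl ⟨i, hi⟩⟩

end Factors

theorem sturmian_recurrent (u : ℕ → Bool)
    (hs : ∀ n : ℕ,
      Set.ncard {w : Fin n → Bool | ∃ k : ℕ, ∀ i : Fin n, w i = u (k + i)} = n + 1) :
    ∀ n k N : ℕ, ∃ m : ℕ, N ≤ m ∧ ∀ i : ℕ, i < n → u (m + i) = u (k + i) := by
  have hc (n : ℕ) : factorComplexity u n = n + 1 :=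
    mod_cast factorComplexity_eq_of_ncard_eq n.succ_ne_zero (hs n)
  have hu : ¬EventuallyPeriodic u :=
    not_eventuallyPeriodic_of_add_one_le_factorComplexity fun n => (hc n).ge
  exact fun n => sturmian_recurrent_general hu (hc n).le
end

section
/- Let u : ℕ → Bool be a sequence that is not balanced. Then there is a (possibly empty) word W such that both 0W0 and 1W1 occur in u: there exist n : ℕ and positions k, l : ℕ such that u(k) = false, u(k + n + 1) = false, u(l) = true, u(l + n + 1) = true, and u(k + 1 + i) = u(l + 1 + i) for all i < n. -/
/-!
Take the least length at which two factors violate balance, the one at `l` having at least two more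
letters `1` than the one at `k`. Every proper prefix of this pair, and every
complementary suffix, is balanced, so on each nonempty proper prefix the excess of the factor at `l`
is exactly `1`. The excess thus rises from `0` to `1` at the first letter, stays constant in
between, and rises again at the last letter: the two factors are `0W0` and `1W1`.
-/

/-- The number of letters `1` in the factor of length `n` of `u` at position `k`, minus that in
the factor of length `n` at position `l`. -/
def trueExcess (u : ℕ → Bool) (k l n : ℕ) : ℤ :=
  Nat.count (fun i => u (k + i) = true) n - Nat.count (fun i => u (l + i) = true) n

/-- Balance of `u` restricted to its factors of length `n`; a sequence is balanced if this holds for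
every `n`. Since `k` and `l` range over all pairs, no absolute value is needed. -/
def IsBalancedAt (u : ℕ → Bool) (n : ℕ) : Prop :=
  ∀ k l, trueExcess u k l n ≤ 1

section

variable {u : ℕ → Bool} {k l m n : ℕ}

lemma trueExcess_zero : trueExcess u k l 0 = 0 := by
  simp [trueExcess]

lemma trueExcess_swap : trueExcess u l k n = -trueExcess u k l n :=
  (neg_sub _ _).symm

lemma trueExcess_le : trueExcess u k l n ≤ n :=
  (sub_le_self _ (Nat.cast_nonneg _)).trans (Nat.cast_le.2 (Nat.count_le _))

lemma trueExcess_add :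
    trueExcess u k l (m + n) = trueExcess u k l m + trueExcess u (k + m) (l + m) n := by
  simp only [trueExcess, Nat.count_add, Nat.cast_add, add_assoc]
  ring

lemma trueExcess_succ :
    trueExcess u k l (n + 1) = trueExcess u k l n + ((u (k + n)).toNat - (u (l + n)).toNat) := by
  rw [trueExcess_add]
  cases hk : u (k + n) <;> cases hl : u (l + n) <;> simp [trueExcess, Nat.count_succ, hk, hl]

lemma trueExcess_succ_eq_iff :
    trueExcess u k l (n + 1) = trueExcess u k l n ↔ u (k + n) = u (l + n) := by
  rw [trueExcess_succ]
  cases u (k + n) <;> cases u (l + n) <;> simp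

lemma trueExcess_lt_succ_iff :
    trueExcess u k l n < trueExcess u k l (n + 1) ↔ u (k + n) = true ∧ u (l + n) = false := by
  rw [trueExcess_succ]
  cases u (k + n) <;> cases u (l + n) <;> simp

lemma isBalancedAt_iff_abs_le_one :
    IsBalancedAt u n ↔ ∀ k l : ℕ,
      |(((Finset.range n).filter (fun i => u (k + i) = true)).card : ℤ) -
        (((Finset.range n).filter (fun i => u (l + i) = true)).card : ℤ)| ≤ 1 := by
  simp only [← Nat.count_eq_card_filter_range]
  change _ ↔ ∀ k l, |trueExcess u k l n| ≤ 1
  refine ⟨fun h k l => abs_le'.2 ⟨h k l, ?_⟩, fun h k l => (abs_le'.1 (h k l)).1⟩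
  exact trueExcess_swap.symm.trans_le (h l k)

lemma IsBalancedAt.trueExcess_eq_one (hm : IsBalancedAt u m) (hn : IsBalancedAt u n)
    (h : 1 < trueExcess u k l (m + n)) : trueExcess u k l m = 1 := by
  rw [trueExcess_add] at h
  have head_le := hm k l
  have tail_le := hn (k + m) (l + m)
  omega

lemma exists_minimal_not_isBalancedAt (h : ¬ ∀ n, IsBalancedAt u n) :
    ∃ N k l, 1 < trueExcess u k l N ∧ ∀ m < N, IsBalancedAt u m := by
  classical
  rw [not_forall] at h
  obtain ⟨k, l, hkl⟩ : ∃ k l, 1 < trueExcess u k l (Nat.find h) := by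
    simpa only [IsBalancedAt, not_forall, not_le] using Nat.find_spec h
  exact ⟨Nat.find h, k, l, hkl, fun m hm => not_not.1 (Nat.find_min h hm)⟩

end

theorem not_balanced_exists_0W0_1W1 (u : ℕ → Bool)
    (h : ¬ ∀ n k l : ℕ,
      |(((Finset.range n).filter (fun i => u (k + i) = true)).card : ℤ) -
        (((Finset.range n).filter (fun i => u (l + i) = true)).card : ℤ)| ≤ 1) :
    ∃ n k l : ℕ, u k = false ∧ u (k + n + 1) = false ∧
      u l = true ∧ u (l + n + 1) = true ∧
      ∀ i : ℕ, i < n → u (k + 1 + i) = u (l + 1 + i) := by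
  simp only [← isBalancedAt_iff_abs_le_one] at h
  obtain ⟨N, l, k, hlk, hmin⟩ := exists_minimal_not_isBalancedAt h
  obtain ⟨n, rfl⟩ : ∃ n, N = n + 2 :=
    Nat.exists_eq_add_of_le' (Nat.cast_lt.1 (hlk.trans_le trueExcess_le))
  have excess_eq_one : ∀ j ≤ n, trueExcess u l k (j + 1) = 1 := fun j hj =>
    (hmin (j + 1) (by omega)).trueExcess_eq_one (hmin (n + 1 - j) (by omega))
      (by rwa [show j + 1 + (n + 1 - j) = n + 2 by omega])
  obtain ⟨hl, hk⟩ : u l = true ∧ u k = false := trueExcess_lt_succ_iff (n := 0).1 <| by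
    rw [trueExcess_zero, excess_eq_one 0 n.zero_le]
    exact one_pos
  obtain ⟨hl', hk'⟩ : u (l + n + 1) = true ∧ u (k + n + 1) = false :=
    trueExcess_lt_succ_iff (n := n + 1).1 ((excess_eq_one n le_rfl).trans_lt hlk)
  refine ⟨n, k, l, hk, hk', hl, hl', fun i hi => ?_⟩
  have interior_eq : u (l + (i + 1)) = u (k + (i + 1)) :=
    trueExcess_succ_eq_iff.1 ((excess_eq_one (i + 1) hi).trans (excess_eq_one i hi.le).symm)
  rw [add_assoc, add_assoc, add_comm 1 i, interior_eq]
end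

section
/- Let u : ℕ → Bool be a Sturmian sequence, i.e., for every n : ℕ the complexity p(u, n) = Set.ncard {w : Fin n → Bool | ∃ k, ∀ i, w i = u (k + i)} equals n + 1. Then u is balanced and u is not eventually periodic. -/
/-!
A sequence with `p(n + 1) = p(n) + 1` has exactly one right special factor of each length `n`, and
between two occurrences of the same factor that avoid right special factors the sequence becomes
periodic. As `p` is unbounded, a Sturmian sequence is not eventually periodic, so its right special
factor of length `n` starts in every window of `n + 1` consecutive positions.

An unbalanced factorial language contains `1w1` and `0w0` for some word `w`, and the shortest such
`w` is a palindrome: otherwise `w` has a prefix `za` and a suffix `bz'` with `a ≠ b`, where `z'` is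
the reversal of `z`, and then `aza` and `bz'b` form a shorter unbalanced pair. In a Sturmian
sequence this palindrome `w` is right special, and the right special factor of length `|w| + 1` is
`cw` for some letter `c`. For the other letter `d`, the palindrome `dwd` starts a window in which
`cw` cannot start, because reflecting `dwd` would identify `c` with `d`.
-/

namespace SturmianWord

section Words

variable {α : Type*}

theorem exists_eq_append_cons_of_ne {x y : List α} (hlen : x.length = y.length) (hne : x ≠ y) :
    ∃ w a b x' y', a ≠ b ∧ x = w ++ a :: x' ∧ y = w ++ b :: y' := by
  induction x generalizing y with
  | nil => exact absurd (List.length_eq_zero_iff.1 hlen.symm).symm hne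
  | cons a x ih =>
    obtain ⟨b, y, rfl⟩ := List.exists_cons_of_length_eq_add_one hlen.symm
    by_cases hab : a = b
    · subst hab
      obtain ⟨w, c, d, x', y', hcd, rfl, rfl⟩ :=
        ih (y := y) (by simpa using hlen) (by simpa using hne)
      exact ⟨a :: w, c, d, x', y', hcd, rfl, rfl⟩
    · exact ⟨[], a, b, x, y, hab, rfl, rfl⟩

theorem exists_prefix_suffix_of_not_palindrome {w : List α} (hw : ¬ w.Palindrome) :
    ∃ z a b, a ≠ b ∧ z ++ [a] <+: w ∧ b :: z.reverse <:+ w := by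
  induction w using List.bidirectionalRec with
  | nil => exact absurd .nil hw
  | singleton a => exact absurd (.singleton a) hw
  | cons_append a l b ih =>
    by_cases hab : a = b
    · subst hab
      obtain ⟨z, c, d, hcd, ⟨s, rfl⟩, t, ht⟩ := ih fun hl => hw (hl.cons_concat a)
      exact ⟨a :: z, c, d, hcd, ⟨s ++ [a], by simp⟩, a :: t, by simp [← ht]⟩
    · exact ⟨[], a, b, hab, ⟨l ++ [b], rfl⟩, a :: l, rfl⟩

theorem exists_infix_of_count_add_two_le {x y : List Bool} (hlen : x.length = y.length)
    (hcount : y.count true + 2 ≤ x.count true) :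
    ∃ w, true :: (w ++ [true]) <:+: x ∧ false :: (w ++ [false]) <:+: y := by
  induction hn : x.length using Nat.strong_induction_on generalizing x y with
  | _ n ih =>
  match x, y with
  | [], _ => simp at hcount
  | a :: x, b :: y =>
    have hlen' : x.length = y.length := by simpa using hlen
    by_cases htail : y.count true + 2 ≤ x.count true
    · obtain ⟨w, hx, hy⟩ := ih x.length (by simp [← hn]) hlen' htail rfl
      exact ⟨w, List.infix_cons hx, List.infix_cons hy⟩
    obtain ⟨rfl, rfl, hcount'⟩ : a = true ∧ b = false ∧ x.count true = y.count true + 1 := by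
      grind
    obtain ⟨w, c, d, x', y', hcd, rfl, rfl⟩ :=
      exists_eq_append_cons_of_ne hlen' fun h => by simp [h] at hcount'
    cases c with
    | true =>
      obtain rfl : d = false := by simpa using hcd.symm
      exact ⟨w, ⟨[], x', by simp⟩, [], y', by simp⟩
    | false =>
      obtain rfl : d = true := by simpa using hcd.symm
      obtain ⟨v, hx, hy⟩ := ih x'.length (by grind) (by simpa using hlen') (by grind) rfl
      exact ⟨v, hx.trans ⟨true :: (w ++ [false]), [], by simp⟩,
        hy.trans ⟨false :: (w ++ [true]), [], by simp⟩⟩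

end Words

section Languages

/-- A language is factorial if it contains every factor (contiguous subword) of its words. -/
def IsFactorial {α : Type*} (L : Set (List α)) : Prop :=
  ∀ ⦃x y : List α⦄, x <:+: y → y ∈ L → x ∈ L

/-- A binary language is balanced if the numbers of `true`s in two of its words of equal length
differ by at most one. The inequality is one-sided, as `x` and `y` can be exchanged. -/
def IsBalanced (L : Set (List Bool)) : Prop :=
  ∀ ⦃x y : List Bool⦄, x ∈ L → y ∈ L → x.length = y.length → x.count true ≤ y.count true + 1

variable {L : Set (List Bool)}

theorem IsFactorial.exists_shorter_of_not_palindrome (hL : IsFactorial L) {w : List Bool}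
    (htrue : true :: (w ++ [true]) ∈ L) (hfalse : false :: (w ++ [false]) ∈ L)
    (hw : ¬ w.Palindrome) :
    ∃ v, v.length < w.length ∧ true :: (v ++ [true]) ∈ L ∧ false :: (v ++ [false]) ∈ L := by
  suffices ∃ x y : List Bool, x.length = y.length ∧ x.length < w.length ∧
      x.count true = y.count true ∧
      true :: (x ++ [true]) ∈ L ∧ false :: (y ++ [false]) ∈ L by
    obtain ⟨x, y, hlen, hlt, hcount, hx, hy⟩ := this
    obtain ⟨v, hvx, hvy⟩ := exists_infix_of_count_add_two_le
      (x := true :: (x ++ [true])) (y := false :: (y ++ [false]))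
      (by simpa using hlen) (by simp [hcount])
    exact ⟨v, lt_of_le_of_lt (by simpa using hvx.length_le) hlt, hL hvx hx, hL hvy hy⟩
  obtain ⟨z, a, b, hab, hpre, hsuf⟩ := exists_prefix_suffix_of_not_palindrome hw
  have hlt : z.length < w.length := by simpa using hpre.length_le
  have hpre' (c : Bool) : c :: (z ++ [a]) <:+: c :: (w ++ [c]) :=
    (List.prefix_cons_inj c |>.2 (hpre.trans (List.prefix_append ..))).isInfix
  have hsuf' (c : Bool) : b :: (z.reverse ++ [c]) <:+: c :: (w ++ [c]) := by
    obtain ⟨s, rfl⟩ := hsuf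
    exact ⟨c :: s, [], by simp⟩
  cases a with
  | true =>
    obtain rfl : b = false := by simpa using hab.symm
    exact ⟨z, z.reverse, by simp, hlt, by simp, hL (hpre' true) htrue, hL (hsuf' false) hfalse⟩
  | false =>
    obtain rfl : b = true := by simpa using hab.symm
    exact ⟨z.reverse, z, by simp, by simpa using hlt, by simp, hL (hsuf' true) htrue,
      hL (hpre' false) hfalse⟩

theorem IsFactorial.exists_palindrome_of_not_isBalanced (hL : IsFactorial L)
    (hbal : ¬ IsBalanced L) :
    ∃ w : List Bool, w.Palindrome ∧ true :: (w ++ [true]) ∈ L ∧ false :: (w ++ [false]) ∈ L := by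
  let S : Set (List Bool) := {w | true :: (w ++ [true]) ∈ L ∧ false :: (w ++ [false]) ∈ L}
  have hS : S.Nonempty := by
    simp only [IsBalanced, not_forall, not_le] at hbal
    obtain ⟨x, y, hx, hy, hlen, hcount⟩ := hbal
    obtain ⟨w, hwx, hwy⟩ := exists_infix_of_count_add_two_le hlen hcount
    exact ⟨w, hL hwx hx, hL hwy hy⟩
  obtain ⟨w, ⟨htrue, hfalse⟩, hmin⟩ := exists_minimalFor_of_wellFoundedLT (· ∈ S) List.length hS
  refine ⟨w, by_contra fun hw => ?_, htrue, hfalse⟩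
  obtain ⟨v, hlt, hv⟩ := hL.exists_shorter_of_not_palindrome htrue hfalse hw
  exact hlt.not_ge (hmin hv hlt.le)

end Languages

theorem existsUnique_of_ncard_eq_ncard_image_add_one {β γ : Type*} {f : β → γ} {s : Set β}
    (h : s.ncard = (f '' s).ncard + 1) :
    ∃! y, ∃ a ∈ s, ∃ b ∈ s, a ≠ b ∧ f a = y ∧ f b = y := by
  have hs : s.Finite := Set.finite_of_ncard_ne_zero (by omega)
  refine existsUnique_of_exists_of_unique ?_ ?_
  · have hinj : ¬ s.InjOn f := fun hinj => by
      have := hinj.ncard_image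
      omega
    simp only [Set.InjOn, not_forall] at hinj
    obtain ⟨a, ha, b, hb, hab, hne⟩ := hinj
    exact ⟨f b, a, ha, b, hb, hne, hab, rfl⟩
  · rintro _ _ ⟨a, ha, a', ha', hne_a, rfl, haa'⟩ ⟨b, hb, b', hb', hne_b, rfl, hbb'⟩
    by_contra hab
    -- Removing one point from each of the two fibres leaves the image unchanged.
    have hsub : f '' s ⊆ f '' (s \ {a', b'}) := by
      rintro _ ⟨c, hc, rfl⟩
      by_cases hca : c = a'
      · exact ⟨a, ⟨ha, by grind⟩, by grind⟩
      by_cases hcb : c = b'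
      · exact ⟨b, ⟨hb, by grind⟩, by grind⟩
      exact ⟨c, ⟨hc, by grind⟩, rfl⟩
    have hpair : ({a', b'} : Set β).ncard = 2 := Set.ncard_pair (by grind)
    have hdiff := Set.ncard_sdiff_add_ncard_of_subset (s := {a', b'}) (t := s) (by grind) hs
    have hle := (Set.ncard_le_ncard hsub (hs.sdiff.image f)).trans (Set.ncard_image_le hs.sdiff)
    omega

section Sequences

variable {α : Type*} {u : ℕ → α}

/-- The factor of length `n` of the sequence `u` that starts at position `k`. -/
def factor (u : ℕ → α) (k n : ℕ) : List α :=
  List.ofFn fun i : Fin n => u (k + i)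

/-- The language of all factors of the sequence `u`. -/
def factors (u : ℕ → α) : Set (List α) :=
  {w | ∃ k, factor u k w.length = w}

/-- The complexity function: the number of factors of length `n`, with value `0` if there are
infinitely many. -/
noncomputable def complexity (u : ℕ → α) (n : ℕ) : ℕ :=
  {w ∈ factors u | w.length = n}.ncard

/-- A Sturmian sequence: for each `n` there are exactly `n + 1` factors of length `n`. -/
def IsSturmian (u : ℕ → α) : Prop :=
  ∀ n, complexity u n = n + 1

/-- A sequence that is periodic with a positive period from some position on. -/
def EventuallyPeriodic (u : ℕ → α) : Prop :=
  ∃ N T : ℕ, 0 < T ∧ ∀ n, N ≤ n → u (n + T) = u n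

/-- A word is right special if two different letters can follow it in `u`. -/
def RightSpecial (u : ℕ → α) (w : List α) : Prop :=
  ∃ a b, a ≠ b ∧ w ++ [a] ∈ factors u ∧ w ++ [b] ∈ factors u

@[simp]
theorem length_factor (u : ℕ → α) (k n : ℕ) : (factor u k n).length = n :=
  List.length_ofFn

@[simp]
theorem getElem_factor (u : ℕ → α) (k n i : ℕ) (hi : i < (factor u k n).length) :
    (factor u k n)[i] = u (k + i) :=
  List.getElem_ofFn hi

theorem eq_getElem_of_factor_eq {k n : ℕ} {w : List α} (h : factor u k n = w) {i : ℕ}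
    (hi : i < w.length) : u (k + i) = w[i] := by
  subst h
  simp

theorem factor_mem_factors (u : ℕ → α) (k n : ℕ) : factor u k n ∈ factors u :=
  ⟨k, by rw [length_factor]⟩

theorem factor_add (u : ℕ → α) (k m n : ℕ) :
    factor u k (m + n) = factor u k m ++ factor u (k + m) n := by
  simp [factor, List.ofFn_add, add_assoc]

theorem factor_succ (u : ℕ → α) (k n : ℕ) :
    factor u k (n + 1) = factor u k n ++ [u (k + n)] := by
  rw [factor_add]
  simp [factor]

theorem factor_succ' (u : ℕ → α) (k n : ℕ) :
    factor u k (n + 1) = u k :: factor u (k + 1) n := by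
  rw [add_comm, factor_add]
  simp [factor]

theorem count_factor [DecidableEq α] (u : ℕ → α) (a : α) (k n : ℕ) :
    (factor u k n).count a = ((Finset.range n).filter fun i => u (k + i) = a).card := by
  induction n with
  | zero => simp [factor]
  | succ n ih =>
    rw [factor_succ, List.count_append, ih, Finset.range_add_one, Finset.filter_insert]
    split <;> simp_all

theorem setOf_factors_length_eq (u : ℕ → α) (n : ℕ) :
    {w ∈ factors u | w.length = n} = Set.range fun k => factor u k n := by
  ext w
  constructor
  · rintro ⟨⟨k, hk⟩, rfl⟩
    exact ⟨k, hk⟩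
  · rintro ⟨k, rfl⟩
    exact ⟨factor_mem_factors u k n, length_factor u k n⟩

theorem complexity_eq_ncard_setOf_fin (u : ℕ → α) (n : ℕ) :
    complexity u n = {w : Fin n → α | ∃ k : ℕ, ∀ i : Fin n, w i = u (k + i)}.ncard := by
  have hrange : {w : Fin n → α | ∃ k : ℕ, ∀ i : Fin n, w i = u (k + i)} =
      Set.range fun (k : ℕ) (i : Fin n) => u (k + i) := by
    ext w
    simp [funext_iff, eq_comm]
  rw [complexity, setOf_factors_length_eq, hrange,
    ← Set.ncard_image_of_injective _ List.ofFn_injective, ← Set.range_comp]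
  rfl

theorem isFactorial_factors (u : ℕ → α) : IsFactorial (factors u) := by
  rintro x _ ⟨s, t, rfl⟩ ⟨k, hk⟩
  rw [List.length_append, List.length_append, factor_add, factor_add] at hk
  exact ⟨k + s.length, (List.append_inj (List.append_inj hk (by simp)).1 (by simp)).2⟩

theorem RightSpecial.of_suffix {v w : List α} (hw : RightSpecial u w) (h : v <:+ w) :
    RightSpecial u v := by
  obtain ⟨a, b, hab, ha, hb⟩ := hw
  obtain ⟨s, rfl⟩ := h
  have hsuf (c : α) : v ++ [c] <:+: s ++ v ++ [c] := ⟨s, [], by simp⟩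
  exact ⟨a, b, hab, isFactorial_factors u (hsuf a) ha, isFactorial_factors u (hsuf b) hb⟩

theorem eq_of_factor_eq_of_not_rightSpecial {k l n : ℕ} (h : factor u k n = factor u l n)
    (hns : ¬ RightSpecial u (factor u k n)) : u (k + n) = u (l + n) := by
  by_contra hne
  refine hns ⟨_, _, hne, ?_, ?_⟩
  · rw [← factor_succ]
    exact factor_mem_factors u k (n + 1)
  · rw [h, ← factor_succ]
    exact factor_mem_factors u l (n + 1)

theorem existsUnique_rightSpecial {n : ℕ} (h : complexity u (n + 1) = complexity u n + 1) :
    ∃! w, w.length = n ∧ RightSpecial u w := by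
  have himage : List.dropLast '' {w ∈ factors u | w.length = n + 1} =
      {w ∈ factors u | w.length = n} := by
    simp only [setOf_factors_length_eq, ← Set.range_comp, Function.comp_def, factor_succ,
      List.dropLast_concat]
  rw [complexity, complexity, ← himage] at h
  refine (existsUnique_congr fun w => ?_).1 (existsUnique_of_ncard_eq_ncard_image_add_one h)
  constructor
  · simp only [setOf_factors_length_eq]
    rintro ⟨_, ⟨k, rfl⟩, _, ⟨l, rfl⟩, hkl, rfl, hlk⟩
    simp only [factor_succ, List.dropLast_concat] at hkl hlk ⊢
    refine ⟨length_factor u k n, by_contra fun hns => hkl ?_⟩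
    rw [hlk, eq_of_factor_eq_of_not_rightSpecial hlk.symm hns]
  · rintro ⟨rfl, a, b, hab, ha, hb⟩
    exact ⟨w ++ [a], ⟨ha, by simp⟩, w ++ [b], ⟨hb, by simp⟩, by simpa using hab, by simp, by simp⟩

theorem eventuallyPeriodic_of_factor_eq {i j n : ℕ} (hij : i < j)
    (heq : factor u i n = factor u j n)
    (hns : ∀ t, i ≤ t → t < j → ¬ RightSpecial u (factor u t n)) : EventuallyPeriodic u := by
  obtain ⟨T, hT, rfl⟩ := exists_pos_add_of_lt' hij
  have hper (s : ℕ) : factor u (i + s) n = factor u (i + s + T) n ∧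
      ¬ RightSpecial u (factor u (i + s) n) := by
    induction s using Nat.strong_induction_on with
    | _ s ih =>
    constructor
    · cases s with
      | zero => exact heq
      | succ s =>
        obtain ⟨hs, hs'⟩ := ih s s.lt_succ_self
        have hnext := eq_of_factor_eq_of_not_rightSpecial hs hs'
        have hlong : factor u (i + s) (n + 1) = factor u (i + s + T) (n + 1) := by
          rw [factor_succ, factor_succ, hs, hnext]
        rw [factor_succ', factor_succ', List.cons.injEq] at hlong
        simpa only [add_assoc, add_comm 1] using hlong.2
    · by_cases hs : s < T
      · exact hns _ (by omega) (by omega)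
      · obtain ⟨r, rfl⟩ := Nat.exists_eq_add_of_le' (not_lt.1 hs)
        obtain ⟨hr, hr'⟩ := ih r (by omega)
        rwa [← add_assoc, ← hr]
  refine ⟨i + n, T, hT, fun t ht => ?_⟩
  obtain ⟨s, rfl⟩ := Nat.exists_eq_add_of_le ht
  obtain ⟨hs, hs'⟩ := hper s
  have hnext := eq_of_factor_eq_of_not_rightSpecial hs hs'
  convert hnext.symm using 2 <;> omega

theorem EventuallyPeriodic.bddAbove_complexity (hu : EventuallyPeriodic u) :
    BddAbove (Set.range (complexity u)) := by
  obtain ⟨N, T, hT, hper⟩ := hu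
  have hperiodic : Function.Periodic (fun n => u (N + n)) T := fun n => by
    simpa only [add_assoc] using hper (N + n) (Nat.le_add_right N n)
  refine ⟨N + T, ?_⟩
  rintro _ ⟨n, rfl⟩
  have hsub : {w ∈ factors u | w.length = n} ⊆ (fun k => factor u k n) '' Set.Iio (N + T) := by
    rw [setOf_factors_length_eq]
    rintro _ ⟨k, rfl⟩
    by_cases hk : k < N
    · exact ⟨k, Set.mem_Iio.2 (by omega), rfl⟩
    obtain ⟨r, rfl⟩ := Nat.exists_eq_add_of_le (not_lt.1 hk)
    refine ⟨N + r % T, by simpa using Nat.mod_lt r hT, ?_⟩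
    refine congrArg List.ofFn (funext fun i => ?_)
    rw [add_assoc, add_assoc]
    calc u (N + (r % T + i)) = u (N + (r % T + i) % T) := (hperiodic.map_mod_nat _).symm
      _ = u (N + (r + i) % T) := by rw [Nat.mod_add_mod]
      _ = u (N + (r + i)) := hperiodic.map_mod_nat _
  calc complexity u n ≤ ((fun k => factor u k n) '' Set.Iio (N + T)).ncard :=
        Set.ncard_le_ncard hsub ((Set.finite_Iio _).image _)
    _ ≤ (Set.Iio (N + T)).ncard := Set.ncard_image_le (Set.finite_Iio _)
    _ = N + T := Set.ncard_Iio_nat _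

theorem IsSturmian.not_eventuallyPeriodic (hu : IsSturmian u) : ¬ EventuallyPeriodic u := by
  intro hper
  obtain ⟨B, hB⟩ := hper.bddAbove_complexity
  have := hB ⟨B, rfl⟩
  rw [hu B] at this
  omega

theorem IsSturmian.existsUnique_rightSpecial (hu : IsSturmian u) (n : ℕ) :
    ∃! w, w.length = n ∧ RightSpecial u w :=
  SturmianWord.existsUnique_rightSpecial (by rw [hu, hu])

theorem IsSturmian.exists_factor_eq_of_rightSpecial (hu : IsSturmian u) {z : List α}
    (hz : RightSpecial u z) (k : ℕ) : ∃ j ≤ z.length, factor u (k + j) z.length = z := by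
  set n := z.length
  by_contra! hne
  have hSturmian : {w ∈ factors u | w.length = n}.ncard = n + 1 := hu n
  have hfin : {w ∈ factors u | w.length = n}.Finite := Set.finite_of_ncard_ne_zero (by omega)
  have hz_mem : z ∈ {w ∈ factors u | w.length = n} := by
    obtain ⟨a, -, -, ha, -⟩ := hz
    exact ⟨isFactorial_factors u (List.prefix_append z [a]).isInfix ha, rfl⟩
  have hinj : (Set.Iic n).InjOn fun j => factor u (k + j) n := by
    have hne_of_lt {i j : ℕ} (hij : i < j) (hj : j ≤ n) :
        factor u (k + i) n ≠ factor u (k + j) n := fun heq => by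
      refine hu.not_eventuallyPeriodic
        (eventuallyPeriodic_of_factor_eq (Nat.add_lt_add_left hij k) heq fun t hit htj hns => ?_)
      obtain ⟨s, rfl⟩ := Nat.exists_eq_add_of_le (show k ≤ t by omega)
      exact hne s (by omega)
        ((hu.existsUnique_rightSpecial n).unique ⟨length_factor u _ n, hns⟩ ⟨rfl, hz⟩)
    intro i hi j hj heq
    by_contra hij
    rcases lt_or_gt_of_ne hij with hij | hij
    · exact hne_of_lt hij hj heq
    · exact hne_of_lt hij hi heq.symm
  have hle : (Set.Iic n).ncard ≤ ({w ∈ factors u | w.length = n} \ {z}).ncard :=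
    Set.ncard_le_ncard_of_injOn _
      (fun j hj => ⟨⟨factor_mem_factors u (k + j) n, length_factor u _ n⟩, hne j hj⟩)
      hinj hfin.sdiff
  rw [Set.ncard_sdiff_singleton_of_mem hz_mem, hSturmian] at hle
  simp at hle

theorem apply_add_eq_of_palindrome_factor {k n i : ℕ} (h : (factor u k (n + 1)).Palindrome)
    (hi : i ≤ n) : u (k + i) = u (k + (n - i)) := by
  have hget : (factor u k (n + 1)).reverse[i]? = (factor u k (n + 1))[i]? := by rw [h.reverse_eq]
  rw [List.getElem?_reverse (by simpa using by omega), List.getElem?_eq_getElem (by simp),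
    List.getElem?_eq_getElem (by simpa using by omega)] at hget
  simpa using hget.symm

theorem factor_ne_cons_of_palindrome {w : List α} (hw : w.Palindrome) {c d : α} (hcd : c ≠ d)
    {k j : ℕ} (hk : factor u k (w.length + 2) = d :: (w ++ [d])) (hj : j ≤ w.length + 1) :
    factor u (k + j) (w.length + 1) ≠ c :: w := by
  intro hkj
  have hreflect {i : ℕ} (hi : i ≤ w.length + 1) : u (k + i) = u (k + (w.length + 1 - i)) :=
    apply_add_eq_of_palindrome_factor (hk ▸ hw.cons_concat d) hi
  rw [factor_succ', List.cons.injEq] at hk hkj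
  obtain ⟨hd, hk⟩ := hk
  obtain ⟨hc, hkj⟩ := hkj
  have hd' : u (k + (w.length + 1)) = d :=
    (hreflect le_rfl).trans (by simpa using hd)
  rw [factor_succ] at hk
  have hk_tail : factor u (k + 1) w.length = w := (List.append_inj hk (by simp)).1
  rcases j.eq_zero_or_pos with rfl | hj_pos
  · exact hcd (hc.symm.trans hd)
  rcases hj.eq_or_lt with rfl | hj_lt
  · exact hcd (hc.symm.trans hd')
  obtain ⟨i, hi⟩ : ∃ i, w.length = j + i := Nat.exists_eq_add_of_le (by omega)
  have hi_lt : i < w.length := by omega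
  refine hcd ?_
  calc c = u (k + (w.length + 1 - j)) := hc.symm.trans (hreflect hj)
    _ = u (k + 1 + i) := by congr 1; omega
    _ = w[i] := eq_getElem_of_factor_eq hk_tail hi_lt
    _ = u (k + j + 1 + i) := (eq_getElem_of_factor_eq hkj hi_lt).symm
    _ = u (k + (w.length + 1)) := by congr 1; omega
    _ = d := hd'

theorem IsSturmian.not_mem_factors_of_palindrome (hu : IsSturmian u) {w : List α}
    (hw : w.Palindrome) {a b : α} (hab : a ≠ b) (ha : a :: (w ++ [a]) ∈ factors u) :
    b :: (w ++ [b]) ∉ factors u := by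
  intro hb
  have hwspecial : RightSpecial u w :=
    ⟨a, b, hab, isFactorial_factors u (List.suffix_cons ..).isInfix ha,
      isFactorial_factors u (List.suffix_cons ..).isInfix hb⟩
  obtain ⟨z, ⟨hzlen, hz⟩, -⟩ := hu.existsUnique_rightSpecial (w.length + 1)
  obtain ⟨c, v, rfl⟩ := List.exists_cons_of_length_eq_add_one hzlen
  obtain rfl : v = w := (hu.existsUnique_rightSpecial w.length).unique
    ⟨by simpa using hzlen, hz.of_suffix (List.suffix_cons c v)⟩ ⟨rfl, hwspecial⟩
  obtain ⟨d, hcd, k, hk⟩ : ∃ d, c ≠ d ∧ d :: (v ++ [d]) ∈ factors u := by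
    by_cases hca : c = a
    · exact ⟨b, hca ▸ hab, hb⟩
    · exact ⟨a, hca, ha⟩
  obtain ⟨j, hj, hkj⟩ := hu.exists_factor_eq_of_rightSpecial hz k
  exact factor_ne_cons_of_palindrome hw hcd (by simpa using hk) hj hkj

theorem IsSturmian.isBalanced_factors {u : ℕ → Bool} (hu : IsSturmian u) :
    IsBalanced (factors u) := by
  by_contra hbal
  obtain ⟨w, hw, htrue, hfalse⟩ :=
    (isFactorial_factors u).exists_palindrome_of_not_isBalanced hbal
  exact hu.not_mem_factors_of_palindrome hw (by decide) htrue hfalse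

end Sequences

end SturmianWord

theorem sturmian_balanced_and_not_eventually_periodic (u : ℕ → Bool)
    (hs : ∀ n : ℕ,
      Set.ncard {w : Fin n → Bool | ∃ k : ℕ, ∀ i : Fin n, w i = u (k + i)} = n + 1) :
    (∀ n k l : ℕ,
      |(((Finset.range n).filter (fun i => u (k + i) = true)).card : ℤ) -
        (((Finset.range n).filter (fun i => u (l + i) = true)).card : ℤ)| ≤ 1) ∧
    ¬ ∃ (N : ℕ) (T : ℕ), 0 < T ∧ ∀ n : ℕ, N ≤ n → u (n + T) = u n := by
  have hu : SturmianWord.IsSturmian u := fun n =>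
    (SturmianWord.complexity_eq_ncard_setOf_fin u n).trans (hs n)
  refine ⟨fun n k l => ?_, hu.not_eventuallyPeriodic⟩
  have hle (a b : ℕ) :
      (SturmianWord.factor u a n).count true ≤ (SturmianWord.factor u b n).count true + 1 :=
    hu.isBalanced_factors (SturmianWord.factor_mem_factors u a n)
      (SturmianWord.factor_mem_factors u b n) (by simp)
  simp only [SturmianWord.count_factor] at hle
  have hkl := hle k l
  have hlk := hle l k
  rw [abs_le]
  omega
end
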